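/- For every positive integer k, there exists a finite graph G with at most 22·4^k vertices and a list assignment L in which every list has size three, such that G with L is 1/6-flexible but G with L is not weighted ε-flexible for any ε > 1/k. -/

import Mathlib

def IsLColoring {V : Type*} (G : SimpleGraph V) (L : V → Finset ℕ) (φ : V → ℕ) : Prop :=
  (∀ v, φ v ∈ L v) ∧ ∀ ⦃u w : V⦄, G.Adj u w → φ u ≠ φ w

def EpsSat {V : Type*} (G : SimpleGraph V) (L : V → Finset ℕ) (D : Finset V)
    (r : V → ℕ) (ε : ℝ) : Prop :=
  ∃ φ : V → ℕ, IsLColoring G L φ ∧ ε * D.card ≤ ((D.filter fun v => φ v = r v).card : ℝ)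

def Flexible {V : Type*} (G : SimpleGraph V) (L : V → Finset ℕ) (ε : ℝ) : Prop :=
  ∀ (D : Finset V) (r : V → ℕ), (∀ v ∈ D, r v ∈ L v) → EpsSat G L D r ε

def WeightTotal {V : Type*} [Fintype V] (L : V → Finset ℕ) (w : V → ℕ → ℝ) : ℝ :=
  ∑ v, ∑ c ∈ L v, w v c

def WEpsSat {V : Type*} [Fintype V] (G : SimpleGraph V) (L : V → Finset ℕ)
    (w : V → ℕ → ℝ) (ε : ℝ) : Prop :=
  ∃ φ : V → ℕ, IsLColoring G L φ ∧ ε * WeightTotal L w ≤ ∑ v, w v (φ v)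

def WFlexible {V : Type*} [Fintype V] (G : SimpleGraph V) (L : V → Finset ℕ) (ε : ℝ) : Prop :=
  ∀ w : V → ℕ → ℝ, (∀ v c, 0 ≤ w v c) → WEpsSat G L w ε


inductive HE : ℕ × Fin 8 → ℕ × Fin 8 → Prop
  | xt (n : ℕ) : HE (n, 0) (n, 1)
  | tm (n : ℕ) : HE (n, 1) (n, 2)
  | tm' (n : ℕ) : HE (n, 1) (n, 3)
  | mm (n : ℕ) : HE (n, 2) (n, 3)
  | xn (n : ℕ) (j : Fin 8) (hj : 4 ≤ j) : HE (n, 0) (n, j)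
  | mt (n c : ℕ) (j : Fin 8) (hj : j = 2 ∨ j = 3) (hc : c = 2 * n ∨ c = 2 * n + 1) : HE (c, j) (n, 1)
  | nt (n c : ℕ) (j : Fin 8) (hj : 4 ≤ j) (hc : c = 2 * n ∨ c = 2 * n + 1) : HE (n, j) (c, 1)

def HL (p : ℕ × Fin 8) : Finset ℕ :=
  match p with
  | (n, 0) => {0, 4 * n + 5, 4 * n + 6}
  | (n, 1) => {0, 2 * n + 1, 2 * n + 2}
  | (n, 2) => {0, 2 * n + 1, 2 * n + 2}
  | (n, 3) => {0, 2 * n + 1, 2 * n + 2}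
  | (n, 4) => {0, 4 * n + 1, 4 * n + 3}
  | (n, 5) => {0, 4 * n + 1, 4 * n + 4}
  | (n, 6) => {0, 4 * n + 2, 4 * n + 3}
  | (n, 7) => {0, 4 * n + 2, 4 * n + 4}

def HF1 (p : ℕ × Fin 8) : ℕ :=
  match p with
  | (n, 0) => 4 * n + 5
  | (_, 1) => 0
  | (n, 2) => 2 * n + 1
  | (n, 3) => 2 * n + 2
  | (n, 4) => 4 * n + 1
  | (n, 5) => 4 * n + 1
  | (n, 6) => 4 * n + 2
  | (n, 7) => 4 * n + 2

def HF2 (p : ℕ × Fin 8) : ℕ :=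
  match p with
  | (n, 0) => 4 * n + 6
  | (n, 1) => 2 * n + 1
  | (n, 2) => 2 * n + 2
  | (_, 3) => 0
  | (_, 4) => 0
  | (n, 5) => 4 * n + 4
  | (_, 6) => 0
  | (n, 7) => 4 * n + 4

def HF3 (p : ℕ × Fin 8) : ℕ :=
  match p with
  | (n, 0) => 4 * n + 6
  | (n, 1) => 2 * n + 2
  | (_, 2) => 0
  | (n, 3) => 2 * n + 1
  | (n, 4) => 4 * n + 3
  | (_, 5) => 0
  | (n, 6) => 4 * n + 3
  | (_, 7) => 0

open Classical in
noncomputable def HB (x t : ℕ → Prop) (p : ℕ × Fin 8) : ℕ :=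
  match p with
  | (n, 0) => if x n then 0 else 4 * n + 5
  | (n, 1) => if t n then 2 * n + 1 else 0
  | (n, 2) => if t n then 0 else 2 * n + 1
  | (n, 3) => 2 * n + 2
  | (n, 4) => if t (2 * n) then (if t (2 * n + 1) then 0 else 4 * n + 3) else 4 * n + 1
  | (n, 5) => 4 * n + 4
  | (n, 6) => 4 * n + 2
  | (n, 7) => 4 * n + 2

def HG : SimpleGraph (ℕ × Fin 8) := SimpleGraph.fromRel HE

def HGood (φ : ℕ × Fin 8 → ℕ) : Prop :=
  (∀ p, φ p ∈ HL p) ∧ ∀ p q, 1 ≤ p.1 → 1 ≤ q.1 → HE p q → φ p ≠ φ q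

lemma HL_card (p : ℕ × Fin 8) : (HL p).card = 3 := by
  obtain ⟨n, j⟩ := p
  fin_cases j <;> simp only [HL] <;>
  · rw [Finset.card_eq_three]
    exact ⟨_, _, _, by omega, by omega, by omega, rfl⟩

lemma HF1_good : HGood HF1 := by
  refine ⟨?_, ?_⟩
  · rintro ⟨n, j⟩
    fin_cases j <;> simp [HL, HF1]
  · intro p q h1 h2 h
    cases h with
    | xn n j hj => fin_cases j <;> simp_all [HF1] <;> omega
    | mt n c j hj hc => rcases hj with rfl | rfl <;> simp_all [HF1]
    | nt n c j hj hc => fin_cases j <;> simp_all [HF1]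
    | _ => simp_all [HF1]

lemma HF2_good : HGood HF2 := by
  refine ⟨?_, ?_⟩
  · rintro ⟨n, j⟩
    fin_cases j <;> simp [HL, HF2]
  · intro p q h1 h2 h
    cases h with
    | xn n j hj => fin_cases j <;> simp_all [HF2] <;> omega
    | mt n c j hj hc => rcases hj with rfl | rfl <;> simp_all [HF2] <;> omega
    | nt n c j hj hc => fin_cases j <;> simp_all [HF2] <;> omega
    | _ => simp_all [HF2] <;> omega

lemma HF3_good : HGood HF3 := by
  refine ⟨?_, ?_⟩
  · rintro ⟨n, j⟩
    fin_cases j <;> simp [HL, HF3]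
  · intro p q h1 h2 h
    cases h with
    | xn n j hj => fin_cases j <;> simp_all [HF3] <;> omega
    | mt n c j hj hc => rcases hj with rfl | rfl <;> simp_all [HF3] <;> omega
    | nt n c j hj hc => fin_cases j <;> simp_all [HF3] <;> omega
    | _ => simp_all [HF3] <;> omega

lemma HB_good (x t : ℕ → Prop) (h1 : ∀ n, 1 ≤ n → x n → t n)
    (h2 : ∀ n, 1 ≤ n → t (2 * n) → t n) (h3 : ∀ n, 1 ≤ n → t (2 * n + 1) → t n)
    (h4 : ∀ n, 1 ≤ n → x n → t (2 * n) → t (2 * n + 1) → False) : HGood (HB x t) := by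
  refine ⟨?_, ?_⟩
  · rintro ⟨n, j⟩
    fin_cases j <;> simp only [HL, HB] <;> (try split_ifs) <;> simp
  · intro p q hp hq h
    cases h with
    | xt n => have := h1 n hp; simp only [HB]; split_ifs <;> first | omega | (exfalso; tauto)
    | tm n => simp only [HB]; split_ifs <;> omega
    | tm' n => simp only [HB]; split_ifs <;> omega
    | mm n => simp only [HB]; split_ifs <;> omega
    | xn n j hj =>
      have := h4 n hp
      fin_cases j <;> simp at hj <;> simp only [HB] <;> split_ifs <;>
        first | omega | (exfalso; tauto)
    | mt n c j hj hc =>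
      have := h2 n hq
      have := h3 n hq
      simp only at hp hq
      rcases hj with rfl | rfl <;> rcases hc with rfl | rfl <;> simp only [HB] <;> split_ifs <;>
        first | omega | (exfalso; tauto)
    | nt n c j hj hc =>
      have := h4 n hp
      rcases hc with rfl | rfl <;> fin_cases j <;> simp at hj <;> simp only [HB] <;>
        split_ifs <;> first | omega | (exfalso; tauto)

lemma HF_cover (p : ℕ × Fin 8) (c : ℕ) (hc : c ∈ HL p) (hs : ¬ (p.2 = 0 ∧ c = 0)) :
    HF1 p = c ∨ HF2 p = c ∨ HF3 p = c := by
  obtain ⟨n, j⟩ := p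
  fin_cases j <;> simp [HL] at hc hs <;> simp only [HF1, HF2, HF3] <;> omega

lemma H_tele {M : Type*} [AddCommMonoid M] (f : ℕ → M) (N : ℕ) (hN : 1 ≤ N) :
    ∑ u ∈ Finset.Ico 1 N, (f (2 * u) + f (2 * u + 1)) + f 1 = ∑ u ∈ Finset.Ico 1 (2 * N), f u := by
  induction N, hN using Nat.le_induction with
  | base => simp
  | succ n hn ih =>
    rw [Finset.sum_Ico_succ_top hn, show 2 * (n + 1) = 2 * n + 1 + 1 by ring,
      Finset.sum_Ico_succ_top (by omega), Finset.sum_Ico_succ_top (by omega), ← ih]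
    abel

lemma H_tx (N : ℕ) (B : Finset ℕ) (hB : B ⊆ Finset.Ico 1 N) :
    ∃ t : ℕ → Prop, (∀ u ∈ B, t u) ∧ (∀ n, t (2 * n) → t n) ∧ (∀ n, t (2 * n + 1) → t n) ∧
      (∀ n, t n → n ∈ B ∨ t (2 * n) ∨ t (2 * n + 1)) ∧ (∀ n, N ≤ n → ¬ t n) := by
  refine ⟨fun u => ∃ v ∈ B, ∃ j, v / 2 ^ j = u, fun u hu => ⟨u, hu, 0, by simp⟩, ?_, ?_, ?_, ?_⟩
  · rintro n ⟨v, hv, j, h⟩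
    exact ⟨v, hv, j + 1, by rw [pow_succ, ← Nat.div_div_eq_div_mul, h]; omega⟩
  · rintro n ⟨v, hv, j, h⟩
    exact ⟨v, hv, j + 1, by rw [pow_succ, ← Nat.div_div_eq_div_mul, h]; omega⟩
  · rintro n ⟨v, hv, j, h⟩
    cases j with
    | zero => left; rw [pow_zero, Nat.div_one] at h; exact h ▸ hv
    | succ j =>
      right
      rw [pow_succ, ← Nat.div_div_eq_div_mul] at h
      rcases Nat.mod_two_eq_zero_or_one (v / 2 ^ j) with h' | h'
      · exact Or.inl ⟨v, hv, j, by omega⟩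
      · exact Or.inr ⟨v, hv, j, by omega⟩
  · rintro n hn ⟨v, hv, j, h⟩
    have := Finset.mem_Ico.1 (hB hv)
    have := Nat.div_le_self v (2 ^ j)
    omega

open Classical in
lemma H_key (a x d b c : Prop) (hx : x ↔ a ∧ ¬ (b ∧ c)) (q1 : a → d) (q2 : b → d) (q3 : c → d)
    (q4 : d → a ∨ b ∨ c) : (if a then 1 else 0) + (if d then 1 else 0) ≤
      2 * (if x then 1 else 0) + ((if b then 1 else 0) + (if c then 1 else 0)) := by
  by_cases a <;> by_cases b <;> by_cases c <;> by_cases d <;> simp_all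

open Classical in
lemma HB_exists (N : ℕ) (B : Finset ℕ) (hB : B ⊆ Finset.Ico 1 N) :
    ∃ x t : ℕ → Prop, HGood (HB x t) ∧ B.card ≤ 2 * (B.filter x).card := by
  obtain ⟨t, tB, t2, t3, t4, t5⟩ := H_tx N B hB
  obtain ⟨x, hx⟩ : ∃ x : ℕ → Prop, ∀ u, x u ↔ u ∈ B ∧ ¬ (t (2 * u) ∧ t (2 * u + 1)) :=
    ⟨_, fun u => Iff.rfl⟩
  refine ⟨x, t, HB_good x t (fun n _ h => tB n ((hx n).1 h).1) (fun n _ => t2 n) (fun n _ => t3 n)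
    (fun n _ h a b => ((hx n).1 h).2 ⟨a, b⟩), ?_⟩
  rcases B.eq_empty_or_nonempty with rfl | ⟨b, hb⟩
  · simp
  have hN : 1 ≤ N := by have := Finset.mem_Ico.1 (hB hb); omega
  let T : ℕ → ℕ := fun u => if t u then 1 else 0
  have key : ∀ u ∈ Finset.Ico 1 N, (if u ∈ B then 1 else 0) + T u ≤
      2 * (if x u then 1 else 0) + (T (2 * u) + T (2 * u + 1)) := by
    intro u _
    convert H_key _ _ _ _ _ (hx u) (tB u) (t2 u) (t3 u) (t4 u)
  have S := Finset.sum_le_sum key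
  have te := H_tele T N hN
  have tail : ∑ u ∈ Finset.Ico 1 (2 * N), T u = ∑ u ∈ Finset.Ico 1 N, T u := by
    symm
    apply Finset.sum_subset
    · intro a; simp only [Finset.mem_Ico]; omega
    · intro a h1 h2
      have : ¬ t a := t5 a (by simp only [Finset.mem_Ico] at h1 h2; omega)
      simp [T, this]
  rw [Finset.sum_add_distrib, Finset.sum_add_distrib, ← Finset.mul_sum] at S
  have e1 : ∑ u ∈ Finset.Ico 1 N, (if u ∈ B then 1 else 0) = B.card := by
    rw [← Finset.card_filter, Finset.filter_mem_eq_inter, Finset.inter_eq_right.2 hB]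
  have e2 : ∑ u ∈ Finset.Ico 1 N, (if x u then 1 else 0) = (B.filter x).card := by
    rw [← Finset.card_filter]
    congr 1
    ext a
    simp only [Finset.mem_filter]
    exact ⟨fun h => ⟨((hx a).1 h.2).1, h.2⟩, fun h => ⟨hB h.1, h.2⟩⟩
  omega

noncomputable def Hg (n : ℕ) : ℝ := (1 / 2) ^ (Nat.log 2 n)

lemma Hg_two (n : ℕ) (hn : 1 ≤ n) : Hg (2 * n) = Hg n / 2 ∧ Hg (2 * n + 1) = Hg n / 2 := by
  have h1 : Nat.log 2 (2 * n) = Nat.log 2 n + 1 := by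
    rw [Nat.log_of_one_lt_of_le (by norm_num) (by omega)]; congr 2; omega
  have h2 : Nat.log 2 (2 * n + 1) = Nat.log 2 n + 1 := by
    rw [Nat.log_of_one_lt_of_le (by norm_num) (by omega)]; congr 2; omega
  simp only [Hg, h1, h2, pow_succ]
  constructor <;> ring

lemma Hg_nonneg (n : ℕ) : 0 ≤ Hg n := by unfold Hg; positivity

lemma Hg_one : Hg 1 = 1 := by simp [Hg]

lemma Hg_sum (K : ℕ) : ∑ u ∈ Finset.Ico 1 (2 ^ K), Hg u = K := by
  induction K with
  | zero => simp
  | succ K ih =>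
    rw [pow_succ, mul_comm, ← H_tele Hg _ Nat.one_le_two_pow, Hg_one]
    push_cast
    rw [← ih]
    congr 1
    apply Finset.sum_congr rfl
    intro u hu
    obtain ⟨h1, h2⟩ := Hg_two u (Finset.mem_Ico.1 hu).1
    rw [h1, h2]; ring

lemma H_bound (N : ℕ) (hN : 1 ≤ N) (x t : ℕ → ℝ) (h0 : ∀ u, 0 ≤ t u) (h1 : t 1 ≤ 1)
    (h : ∀ u ∈ Finset.Ico 1 N, x u + t (2 * u) + t (2 * u + 1) ≤ 2 * t u) :
    ∑ u ∈ Finset.Ico 1 N, Hg u * x u ≤ 2 := by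
  have te := H_tele (fun u => Hg u * t u) N hN
  have mono : ∑ u ∈ Finset.Ico 1 N, Hg u * t u ≤ ∑ u ∈ Finset.Ico 1 (2 * N), Hg u * t u := by
    apply Finset.sum_le_sum_of_subset_of_nonneg
    · intro a; simp only [Finset.mem_Ico]; omega
    · intro a _ _; exact mul_nonneg (Hg_nonneg a) (h0 a)
  have S : ∑ u ∈ Finset.Ico 1 N, Hg u * x u ≤ ∑ u ∈ Finset.Ico 1 N, (2 * (Hg u * t u)
      - 2 * (Hg (2 * u) * t (2 * u) + Hg (2 * u + 1) * t (2 * u + 1))) := by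
    apply Finset.sum_le_sum
    intro u hu
    obtain ⟨a, b⟩ := Hg_two u (Finset.mem_Ico.1 hu).1
    rw [a, b]
    have := mul_le_mul_of_nonneg_left (h u hu) (Hg_nonneg u)
    linarith
  rw [Finset.sum_sub_distrib, ← Finset.mul_sum, ← Finset.mul_sum] at S
  simp only [Hg_one] at te
  linarith

lemma H_flex (N m : ℕ) (ψ : Fin m → ℕ × Fin 8) (hinj : Function.Injective ψ)
    (hr : ∀ p, (∃ i, ψ i = p) ↔ p.1 ∈ Finset.Ico 1 N) :
    Flexible (HG.comap ψ) (fun i => HL (ψ i)) (1 / 6) := by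
  classical
  intro D r hD
  have good : ∀ φ, HGood φ → IsLColoring (HG.comap ψ) (fun i => HL (ψ i)) (fun i => φ (ψ i)) := by
    intro φ hφ
    have pos : ∀ i, 1 ≤ (ψ i).1 := fun i => (Finset.mem_Ico.1 ((hr _).1 ⟨i, rfl⟩)).1
    refine ⟨fun v => hφ.1 _, fun u w h => ?_⟩
    simp only [SimpleGraph.comap_adj, HG, SimpleGraph.fromRel_adj] at h
    rcases h.2 with h | h
    · exact hφ.2 _ _ (pos _) (pos _) h
    · exact (hφ.2 _ _ (pos _) (pos _) h).symm
  have fin : ∀ φ, HGood φ → D.card ≤ 6 * (D.filter fun v => φ (ψ v) = r v).card →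
      EpsSat (HG.comap ψ) (fun i => HL (ψ i)) D r (1 / 6) := by
    intro φ hφ h
    refine ⟨_, good φ hφ, ?_⟩
    have : (D.card : ℝ) ≤ 6 * ((D.filter fun v => φ (ψ v) = r v).card : ℝ) := by exact_mod_cast h
    linarith
  set D1 := D.filter (fun i => (ψ i).2 = 0 ∧ r i = 0) with hD1
  set D2 := D.filter (fun i => ¬ ((ψ i).2 = 0 ∧ r i = 0)) with hD2
  have hc : D1.card + D2.card = D.card := Finset.card_filter_add_card_filter_not _
  have cov : D2.card ≤ (D.filter fun v => HF1 (ψ v) = r v).card +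
      ((D.filter fun v => HF2 (ψ v) = r v).card + (D.filter fun v => HF3 (ψ v) = r v).card) := by
    have : D2 ⊆ (D.filter fun v => HF1 (ψ v) = r v) ∪ ((D.filter fun v => HF2 (ψ v) = r v) ∪
        (D.filter fun v => HF3 (ψ v) = r v)) := by
      intro i hi
      rw [hD2, Finset.mem_filter] at hi
      have := HF_cover (ψ i) (r i) (hD i hi.1) hi.2
      simp only [Finset.mem_union, Finset.mem_filter, hi.1, true_and]
      exact this
    refine (Finset.card_le_card this).trans ((Finset.card_union_le _ _).trans ?_)
    gcongr
    exact Finset.card_union_le _ _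
  obtain ⟨x, t, hxt, hB⟩ := HB_exists N (D1.image fun i => (ψ i).1) (by
    intro a ha
    obtain ⟨i, _, rfl⟩ := Finset.mem_image.1 ha
    exact (hr _).1 ⟨i, rfl⟩)
  have inj : Set.InjOn (fun i => (ψ i).1) (D1 : Set (Fin m)) := by
    intro i hi j hj h
    simp only [hD1, Finset.coe_filter, Set.mem_ofPred_eq] at hi hj
    exact hinj (Prod.ext h (hi.2.1.trans hj.2.1.symm))
  rw [Finset.card_image_of_injOn inj, Finset.filter_image] at hB
  have hB' := hB.trans (Nat.mul_le_mul_left 2 Finset.card_image_le)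
  have hsub : D1.filter (fun i => x (ψ i).1) ⊆ D.filter fun v => HB x t (ψ v) = r v := by
    intro i hi
    simp only [hD1, Finset.mem_filter] at hi ⊢
    obtain ⟨⟨h1, h2, h3⟩, h4⟩ := hi
    refine ⟨h1, ?_⟩
    have : ψ i = ((ψ i).1, 0) := Prod.ext rfl h2
    rw [this, h3]
    simp [HB, h4]
  have hle := Finset.card_le_card hsub
  by_cases c1 : D.card ≤ 6 * (D.filter fun v => HF1 (ψ v) = r v).card
  · exact fin _ HF1_good c1
  by_cases c2 : D.card ≤ 6 * (D.filter fun v => HF2 (ψ v) = r v).card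
  · exact fin _ HF2_good c2
  by_cases c3 : D.card ≤ 6 * (D.filter fun v => HF3 (ψ v) = r v).card
  · exact fin _ HF3_good c3
  exact fin _ hxt (by omega)

lemma H_weight (k N m : ℕ) (hk : 0 < k) (hN : N = 2 ^ (2 * k)) (ψ : Fin m → ℕ × Fin 8)
    (hinj : Function.Injective ψ)
    (hr : ∀ p, (∃ i, ψ i = p) ↔ p.1 ∈ Finset.Ico 1 N)
    (hsum : ∀ F : ℕ × Fin 8 → ℝ, ∑ i, F (ψ i) = ∑ n ∈ Finset.Ico 1 N, ∑ j, F (n, j))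
    (ε : ℝ) (hε : 1 / k < ε) :
    ¬ WFlexible (HG.comap ψ) (fun i => HL (ψ i)) ε := by
  classical
  intro hW
  obtain ⟨φ, ⟨hL, hA⟩, hφ⟩ := hW (fun i c => if (ψ i).2 = 0 ∧ c = 0 then Hg (ψ i).1 else 0) (by
    intro v c; split_ifs; exacts [Hg_nonneg _, le_rfl])
  set Φ : ℕ × Fin 8 → ℕ := Function.extend ψ φ 0 with hΦ
  have hΦψ : ∀ i, Φ (ψ i) = φ i := fun i => hinj.extend_apply _ _ _
  have hout : ∀ p, p.1 ∉ Finset.Ico 1 N → Φ p = 0 := fun p hp =>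
    Function.extend_apply' _ _ _ (fun h => hp ((hr p).1 h))
  have hΦL : ∀ n j, 1 ≤ n → n < N → Φ (n, j) ∈ HL (n, j) := by
    intro n j h1 h2
    obtain ⟨i, hi⟩ := (hr (n, j)).2 (Finset.mem_Ico.2 ⟨h1, h2⟩)
    rw [← hi, hΦψ]; exact hL i
  have hΦE : ∀ p q, HE p q → p ≠ q → p.1 ∈ Finset.Ico 1 N → q.1 ∈ Finset.Ico 1 N → Φ p ≠ Φ q := by
    intro p q h hne hp hq
    obtain ⟨i, rfl⟩ := (hr p).2 hp
    obtain ⟨j, rfl⟩ := (hr q).2 hq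
    rw [hΦψ, hΦψ]
    apply hA
    simp only [SimpleGraph.comap_adj, HG, SimpleGraph.fromRel_adj]
    exact ⟨hne, Or.inl h⟩
  have hN1 : 1 ≤ N := hN ▸ Nat.one_le_two_pow
  have tot : WeightTotal (fun i => HL (ψ i))
      (fun i c => if (ψ i).2 = 0 ∧ c = 0 then Hg (ψ i).1 else 0) = 2 * k := by
    unfold WeightTotal
    rw [hsum (fun p => ∑ c ∈ HL p, if p.2 = 0 ∧ c = 0 then Hg p.1 else 0)]
    have := Hg_sum (2 * k)
    rw [← hN] at this
    push_cast at this
    rw [← this]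
    apply Finset.sum_congr rfl
    intro n _
    rw [Fin.sum_univ_eight]
    simp [HL]
  have sat : ∑ v, (if (ψ v).2 = 0 ∧ φ v = 0 then Hg (ψ v).1 else 0) ≤ 2 := by
    simp only [← hΦψ]
    rw [hsum (fun p => if p.2 = 0 ∧ Φ p = 0 then Hg p.1 else 0)]
    have := H_bound N hN1 (fun n => if Φ (n, 0) = 0 then 1 else 0)
      (fun n => if Φ (n, 1) = 0 then 0 else 1)
      (by intro u; split_ifs <;> norm_num) (by split_ifs <;> norm_num)
      (by
        intro u hu
        have hu' := Finset.mem_Ico.1 hu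
        have A : Φ (u, 1) = 0 → Φ (u, 0) ≠ 0 := fun h h' =>
          hΦE _ _ (HE.xt u) (by simp) hu hu (h'.trans h.symm)
        have C : ∀ c, (c = 2 * u ∨ c = 2 * u + 1) → Φ (u, 1) = 0 → Φ (c, 1) = 0 := by
          intro c hc h0
          by_cases hcN : c ∈ Finset.Ico 1 N
          · have hc' := Finset.mem_Ico.1 hcN
            have l1 := hΦL c 1 hc'.1 hc'.2
            have l2 := hΦL c 2 hc'.1 hc'.2
            have l3 := hΦL c 3 hc'.1 hc'.2
            have e1 := hΦE _ _ (HE.tm c) (by simp) hcN hcN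
            have e2 := hΦE _ _ (HE.tm' c) (by simp) hcN hcN
            have e3 := hΦE _ _ (HE.mm c) (by simp) hcN hcN
            have e4 := hΦE _ _ (HE.mt u c 2 (by simp) hc) (by simp) hcN hu
            have e5 := hΦE _ _ (HE.mt u c 3 (by simp) hc) (by simp) hcN hu
            simp only [HL, Finset.mem_insert, Finset.mem_singleton] at l1 l2 l3
            omega
          · exact hout _ hcN
        have E : Φ (u, 0) = 0 → Φ (2 * u, 1) ≠ 0 → Φ (2 * u + 1, 1) ≠ 0 → False := by
          intro h0 ha hb
          have ma : 2 * u ∈ Finset.Ico 1 N := by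
            by_contra h; exact ha (hout _ h)
          have mb : 2 * u + 1 ∈ Finset.Ico 1 N := by
            by_contra h; exact hb (hout _ h)
          have ma' := Finset.mem_Ico.1 ma
          have mb' := Finset.mem_Ico.1 mb
          have l1 := hΦL _ 1 ma'.1 ma'.2
          have l2 := hΦL _ 1 mb'.1 mb'.2
          have l4 := hΦL u 4 hu'.1 hu'.2
          have l5 := hΦL u 5 hu'.1 hu'.2
          have l6 := hΦL u 6 hu'.1 hu'.2
          have l7 := hΦL u 7 hu'.1 hu'.2
          have ex : ∀ j : Fin 8, 4 ≤ j → Φ (u, 0) ≠ Φ (u, j) ∧ Φ (u, j) ≠ Φ (2 * u, 1) ∧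
              Φ (u, j) ≠ Φ (2 * u + 1, 1) := by
            intro j hj
            have j0 : j ≠ 0 := by rintro rfl; simp at hj
            have j1 : j ≠ 1 := by rintro rfl; simp at hj
            exact ⟨hΦE _ _ (HE.xn u j hj) (by simpa using j0.symm) hu hu,
              hΦE _ _ (HE.nt u _ j hj (Or.inl rfl)) (by simp [j1]) hu ma,
              hΦE _ _ (HE.nt u _ j hj (Or.inr rfl)) (by simp [j1]) hu mb⟩
          have e4 := ex 4 (by decide)
          have e5 := ex 5 (by decide)
          have e6 := ex 6 (by decide)
          have e7 := ex 7 (by decide)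
          simp only [HL, Finset.mem_insert, Finset.mem_singleton] at l1 l2 l4 l5 l6 l7
          rcases l1 with l1 | l1 | l1 <;> rcases l2 with l2 | l2 | l2 <;> omega
        have C1 := C _ (Or.inl rfl)
        have C2 := C _ (Or.inr rfl)
        by_cases a : Φ (u, 1) = 0
        · simp [a, A a, C1 a, C2 a]
        · by_cases b : Φ (u, 0) = 0 <;> by_cases c : Φ (2 * u, 1) = 0 <;>
            by_cases d : Φ (2 * u + 1, 1) = 0 <;> simp only [a, b, c, d, if_true, if_false] <;>
            first | exact (E b c d).elim | norm_num)
    refine le_trans (le_of_eq ?_) this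
    apply Finset.sum_congr rfl
    intro n _
    rw [Fin.sum_univ_eight]
    simp
  rw [tot] at hφ
  have hk' : (0 : ℝ) < k := by exact_mod_cast hk
  rw [div_lt_iff₀ hk'] at hε
  have := hφ.trans sat
  linarith

theorem stmt8 (k : ℕ) (hk : 0 < k) :
    ∃ (m : ℕ) (G : SimpleGraph (Fin m)) (L : Fin m → Finset ℕ),
      m ≤ 22 * 4 ^ k ∧ (∀ v, (L v).card = 3) ∧
      Flexible G L (1 / 6) ∧
      ∀ ε : ℝ, 1 / k < ε → ¬ WFlexible G L ε := by
  classical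
  let S : Finset (ℕ × Fin 8) := Finset.Ico 1 (2 ^ (2 * k)) ×ˢ Finset.univ
  let ψ : Fin S.card → ℕ × Fin 8 := fun i => (S.equivFin.symm i).1
  have hinj : Function.Injective ψ := Subtype.val_injective.comp S.equivFin.symm.injective
  have hr : ∀ p, (∃ i, ψ i = p) ↔ p.1 ∈ Finset.Ico 1 (2 ^ (2 * k)) := by
    intro p
    have hp : p ∈ S ↔ p.1 ∈ Finset.Ico 1 (2 ^ (2 * k)) := by simp [S, Finset.mem_product]
    rw [← hp]
    constructor
    · rintro ⟨i, rfl⟩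
      exact (S.equivFin.symm i).2
    · intro h
      exact ⟨S.equivFin ⟨p, h⟩, by simp [ψ]⟩
  refine ⟨S.card, HG.comap ψ, fun i => HL (ψ i), ?_, fun v => HL_card _, H_flex _ _ ψ hinj hr, ?_⟩
  · simp only [S, Finset.card_product, Nat.card_Ico, Finset.card_univ, Fintype.card_fin, pow_mul]
    norm_num
    omega
  · intro ε hε
    refine H_weight k _ _ hk rfl ψ hinj hr ?_ ε hε
    intro F
    rw [← Finset.sum_product (Finset.Ico 1 (2 ^ (2 * k))) Finset.univ F]
    rw [Equiv.sum_comp S.equivFin.symm (fun p : S => F p.1)]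
    exact Finset.sum_coe_sort S F
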